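/- Let m, n ∈ ℤ≥0 and define operators on F by G⁺(i−1/2) = −(i+m)Ψ⁺(i−1/2) and G⁻(i−1/2) = −(i+n)Ψ⁻(i−1/2), i ∈ ℤ. Then: (a) Ker_F G⁻(m+1/2) ∩ Ker_F G⁺(n+1/2) equals the span F̄(−m/z, −n/z) of those basis monomials of F that contain neither the factor Ψ⁺(−m−1/2) nor the factor Ψ⁻(−n−1/2) (i.e. the exterior algebra on the generators Ψ⁺(−i−1/2), Ψ⁻(−j−1/2) with i, j ∈ ℤ≥0, i ≠ m, j ≠ n); (b) F̄(−m/z, −n/z) is invariant under all G⁺(r), G⁻(r), r ∈ 1/2+ℤ, and is irreducible: its only subspaces invariant under all these operators are {0} and F̄(−m/z, −n/z). -/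

import Mathlib

noncomputable section

/-- The fermionic Fock space `F`: it has basis indexed by pairs `(A, B)` of finite sets of
nonnegative integers, the pair `(A, B)` corresponding to the basis monomial
`Ψ⁺(−n₁−1/2)⋯Ψ⁺(−n_r−1/2)·Ψ⁻(−k₁−1/2)⋯Ψ⁻(−k_s−1/2)·𝟙` where `A = {n₁ > ⋯ > n_r}` and
`B = {k₁ > ⋯ > k_s}`. -/
abbrev FockF : Type := (Finset ℕ × Finset ℕ) →₀ ℂ

/-- The vacuum vector `𝟙`. -/
def vac : FockF := Finsupp.single (∅, ∅) 1

/-- `(−1)^{#{a ∈ S : a > m}}`. -/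
def sgn (S : Finset ℕ) (m : ℕ) : ℂ := (-1 : ℂ) ^ (S.filter fun a => m < a).card

/-- `Ψ⁺(−m−1/2)`: exterior multiplication (creation). -/
def psiPneg (m : ℕ) : Module.End ℂ FockF :=
  Finsupp.lsum ℂ fun AB : Finset ℕ × Finset ℕ => LinearMap.toSpanSingleton ℂ FockF
    (if m ∈ AB.1 then 0 else sgn AB.1 m • Finsupp.single (insert m AB.1, AB.2) 1)

/-- `Ψ⁺(m+1/2)`: the odd contraction operator pairing with `Ψ⁻(−m−1/2)` (annihilation). -/
def psiPpos (m : ℕ) : Module.End ℂ FockF :=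
  Finsupp.lsum ℂ fun AB : Finset ℕ × Finset ℕ => LinearMap.toSpanSingleton ℂ FockF
    (if m ∈ AB.2 then ((-1 : ℂ) ^ AB.1.card * sgn AB.2 m) • Finsupp.single (AB.1, AB.2.erase m) 1
     else 0)

/-- `Ψ⁻(−m−1/2)`: exterior multiplication (creation). -/
def psiMneg (m : ℕ) : Module.End ℂ FockF :=
  Finsupp.lsum ℂ fun AB : Finset ℕ × Finset ℕ => LinearMap.toSpanSingleton ℂ FockF
    (if m ∈ AB.2 then 0
     else ((-1 : ℂ) ^ AB.1.card * sgn AB.2 m) • Finsupp.single (AB.1, insert m AB.2) 1)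

/-- `Ψ⁻(m+1/2)`: the odd contraction operator pairing with `Ψ⁺(−m−1/2)` (annihilation). -/
def psiMpos (m : ℕ) : Module.End ℂ FockF :=
  Finsupp.lsum ℂ fun AB : Finset ℕ × Finset ℕ => LinearMap.toSpanSingleton ℂ FockF
    (if m ∈ AB.1 then sgn AB.1 m • Finsupp.single (AB.1.erase m, AB.2) 1 else 0)

/-- `PsiP i` is the operator `Ψ⁺(i − 1/2)`, `i ∈ ℤ`. -/
def PsiP (i : ℤ) : Module.End ℂ FockF :=
  if i ≤ 0 then psiPneg (-i).toNat else psiPpos (i - 1).toNat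

/-- `PsiM i` is the operator `Ψ⁻(i − 1/2)`, `i ∈ ℤ`. -/
def PsiM (i : ℤ) : Module.End ℂ FockF :=
  if i ≤ 0 then psiMneg (-i).toNat else psiMpos (i - 1).toNat

/-- `G⁺(i−1/2) = (λ − i)·Ψ⁺(i−1/2)`. -/
def Gplus (lam : ℂ) (i : ℤ) : Module.End ℂ FockF := (lam - (i : ℂ)) • PsiP i

/-- The finite set of indices `k ≥ −p` for which `Ψ⁻(k+i−1/2)` can act nontrivially on the
basis monomial `AB`; outside of it all terms of the locally finite sum defining `G⁻` vanish. -/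
def GminusIdx (p : ℕ) (i : ℤ) (AB : Finset ℕ × Finset ℕ) : Finset ℤ :=
  (Finset.Icc (-(p : ℤ)) (-i) ∪ AB.1.image fun a : ℕ => (a : ℤ) + 1 - i).filter
    fun k => -(p : ℤ) ≤ k

/-- `G⁻(i−1/2) = −i·Ψ⁻(i−1/2) + Σ_{k=−p}^∞ χ_{−k}·Ψ⁻(k+i−1/2)` (a locally finite sum). -/
def Gminus (p : ℕ) (χ : ℤ → ℂ) (i : ℤ) : Module.End ℂ FockF :=
  (-(i : ℂ)) • PsiM i +
    Finsupp.lsum ℂ fun AB : Finset ℕ × Finset ℕ => LinearMap.toSpanSingleton ℂ FockF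
      (∑ k ∈ GminusIdx p i AB, χ (-k) • PsiM (k + i) (Finsupp.single AB 1))

end

/-- The subspace `F̄(−m/z, −n/z)` of `F`: the span of the basis monomials containing neither
the factor `Ψ⁺(−m−1/2)` nor the factor `Ψ⁻(−n−1/2)`. -/
noncomputable def Fbar (m n : ℕ) : Submodule ℂ FockF :=
  Submodule.span ℂ
    {x : FockF | ∃ A B : Finset ℕ, m ∉ A ∧ n ∉ B ∧ x = Finsupp.single (A, B) 1}

/-!
Each mode of `Ψ⁺` and `Ψ⁻` maps the monomials on which it does not vanish injectively to nonzero
multiples of monomials. Hence the kernels of the annihilation operators, and with them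
`F̄(−m/z, −n/z)`, are spanned by monomials. The coefficients `−(i+m)` and `−(i+n)` vanish only at
the creation modes `Ψ⁺(−m−1/2)` and `Ψ⁻(−n−1/2)`, so a subspace is invariant under `G⁺` and `G⁻`
iff it is invariant under all the other modes. A nonzero invariant subspace contains the vacuum,
because the annihilation operators lower the degree and their common kernel is spanned by the
vacuum, and the remaining creation operators then produce every monomial of `F̄(−m/z, −n/z)`.
-/

section MonomialMaps

variable {α β R : Type*}

/-- `T` is a monomial map along the partial function `f` with domain `s`: it sends the basis
vector at `a ∈ s` to a nonzero multiple of the basis vector at `f a`, and the other basis vectors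
to zero. The multiples are left unspecified, which keeps the signs of the fermionic operators out
of the argument. -/
structure IsMonomialOn [Semiring R] (T : (α →₀ R) →ₗ[R] (β →₀ R)) (f : α → β) (s : Set α) :
    Prop where
  exists_map_single : ∀ a ∈ s, ∃ c : R, c ≠ 0 ∧
    T (Finsupp.single a 1) = c • Finsupp.single (f a) 1
  map_single_eq_zero : ∀ a ∉ s, T (Finsupp.single a 1) = 0

lemma isMonomialOn_of_map_single [Semiring R] {T : (α →₀ R) →ₗ[R] (β →₀ R)} {f : α → β}
    {s : Set α} [DecidablePred (· ∈ s)] {c : α → R} (hc : ∀ a, c a ≠ 0)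
    (hT : ∀ a, T (Finsupp.single a 1) = if a ∈ s then c a • Finsupp.single (f a) 1 else 0) :
    IsMonomialOn T f s where
  exists_map_single a ha := ⟨c a, hc a, by rw [hT, if_pos ha]⟩
  map_single_eq_zero a ha := by rw [hT, if_neg ha]

namespace IsMonomialOn

variable [Semiring R] {T : (α →₀ R) →ₗ[R] (β →₀ R)} {f : α → β} {s : Set α}

lemma supported_le_comap_supported (hT : IsMonomialOn T f s) {t : Set α} {t' : Set β}
    (hf : Set.MapsTo f (t ∩ s) t') :
    Finsupp.supported R R t ≤ (Finsupp.supported R R t').comap T := by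
  rw [Finsupp.supported_eq_span_single, Submodule.span_le]
  rintro _ ⟨a, hat, rfl⟩
  by_cases has : a ∈ s
  · obtain ⟨c, -, hc⟩ := hT.exists_map_single a has
    simpa only [SetLike.mem_coe, Submodule.mem_comap, hc] using
      Submodule.smul_mem _ c (Finsupp.single_mem_supported R 1 (hf ⟨hat, has⟩))
  · simp only [SetLike.mem_coe, Submodule.mem_comap, hT.map_single_eq_zero a has, zero_mem]

lemma exists_apply_eq_mul (hT : IsMonomialOn T f s) (hf : Set.InjOn f s) {a : α} (ha : a ∈ s) :
    ∃ c : R, c ≠ 0 ∧ ∀ v, T v (f a) = v a * c := by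
  obtain ⟨c, hc, hTa⟩ := hT.exists_map_single a ha
  suffices Finsupp.lapply (f a) ∘ₗ T = LinearMap.toSpanSingleton R R c ∘ₗ Finsupp.lapply a from
    ⟨c, hc, fun v => LinearMap.congr_fun this v⟩
  refine Finsupp.lhom_ext' fun b => LinearMap.ext_ring ?_
  simp only [LinearMap.comp_apply, Finsupp.lsingle_apply, Finsupp.lapply_apply,
    LinearMap.toSpanSingleton_apply, smul_eq_mul]
  obtain rfl | hba := eq_or_ne b a
  · simp [hTa]
  by_cases hb : b ∈ s
  · obtain ⟨d, -, hTb⟩ := hT.exists_map_single b hb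
    simp [hTb, hba, hf.ne hb ha hba]
  · simp [hT.map_single_eq_zero b hb, hba]

lemma ker_eq_supported_compl [NoZeroDivisors R] (hT : IsMonomialOn T f s) (hf : Set.InjOn f s) :
    LinearMap.ker T = Finsupp.supported R R sᶜ := by
  refine le_antisymm (fun v hv => ?_) ?_
  · refine (Finsupp.mem_supported' R v).2 fun a ha => ?_
    obtain ⟨c, hc, hTv⟩ := hT.exists_apply_eq_mul hf (Set.notMem_compl_iff.1 ha)
    have hzero : v a * c = 0 := by rw [← hTv, LinearMap.mem_ker.1 hv, Finsupp.zero_apply]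
    exact (mul_eq_zero.1 hzero).resolve_right hc
  · rw [Finsupp.supported_eq_span_single, Submodule.span_le]
    rintro _ ⟨a, ha, rfl⟩
    exact hT.map_single_eq_zero a ha

lemma single_mem_of_mem_invtSubmodule {K : Type*} [DivisionRing K] {T : Module.End K (α →₀ K)}
    {f : α → α} (hT : IsMonomialOn T f s) {U : Submodule K (α →₀ K)}
    (hU : U ∈ T.invtSubmodule) {a : α} (has : a ∈ s) (haU : Finsupp.single a 1 ∈ U) :
    Finsupp.single (f a) 1 ∈ U := by
  obtain ⟨c, hc, hTa⟩ := hT.exists_map_single a has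
  have hmem : c • Finsupp.single (f a) (1 : K) ∈ U := hTa ▸ hU haU
  exact (Submodule.smul_mem_iff U hc).1 hmem

end IsMonomialOn

end MonomialMaps

section Invariance

variable {K V : Type*} [Field K] [AddCommGroup V] [Module K V]

lemma mem_invtSubmodule_smul_iff {c : K} {T : Module.End K V} {U : Submodule K V} :
    U ∈ (c • T).invtSubmodule ↔ (c ≠ 0 → U ∈ T.invtSubmodule) := by
  obtain rfl | hc := eq_or_ne c 0
  · simp
  · simp [hc, Module.End.mem_invtSubmodule, Submodule.comap_smul]

lemma forall_mem_invtSubmodule_neg_add_smul_iff [CharZero K] (m : ℕ) (T : ℤ → Module.End K V)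
    (U : Submodule K V) :
    (∀ i : ℤ, U ∈ ((-((i : K) + m)) • T i).invtSubmodule) ↔
      (∀ j : ℕ, j ≠ m → U ∈ (T (-j)).invtSubmodule) ∧
        ∀ j : ℕ, U ∈ (T (j + 1)).invtSubmodule := by
  have hcoeff (i : ℤ) : -((i : K) + m) ≠ 0 ↔ i ≠ -m := by
    rw [neg_ne_zero, ← Int.cast_natCast, ← Int.cast_add, Int.cast_ne_zero, ne_eq, ne_eq,
      add_eq_zero_iff_eq_neg]
  simp only [mem_invtSubmodule_smul_iff, hcoeff]
  refine ⟨fun h => ⟨fun j hj => h _ (by omega), fun j => h _ (by omega)⟩, fun h i hi => ?_⟩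
  obtain ⟨j, rfl | rfl⟩ : ∃ j : ℕ, i = -j ∨ i = j + 1 := ⟨(max (-i) (i - 1)).toNat, by omega⟩
  · exact h.1 j (by omega)
  · exact h.2 j

end Invariance

section Modes

lemma sgn_ne_zero (S : Finset ℕ) (m : ℕ) : sgn S m ≠ 0 :=
  pow_ne_zero _ (neg_ne_zero.2 one_ne_zero)

lemma neg_one_pow_mul_sgn_ne_zero (k : ℕ) (S : Finset ℕ) (m : ℕ) : (-1) ^ k * sgn S m ≠ 0 :=
  mul_ne_zero (pow_ne_zero _ (neg_ne_zero.2 one_ne_zero)) (sgn_ne_zero S m)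

variable (m : ℕ)

lemma isMonomialOn_psiPneg :
    IsMonomialOn (psiPneg m) (fun x => (insert m x.1, x.2)) {x | m ∉ x.1} :=
  isMonomialOn_of_map_single (fun x => sgn_ne_zero x.1 m) fun x => by simp [psiPneg, ite_not]

lemma isMonomialOn_psiMneg :
    IsMonomialOn (psiMneg m) (fun x => (x.1, insert m x.2)) {x | m ∉ x.2} :=
  isMonomialOn_of_map_single (fun x => neg_one_pow_mul_sgn_ne_zero x.1.card x.2 m) fun x => by
    simp [psiMneg, ite_not]

lemma isMonomialOn_psiPpos :
    IsMonomialOn (psiPpos m) (fun x => (x.1, x.2.erase m)) {x | m ∈ x.2} :=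
  isMonomialOn_of_map_single (fun x => neg_one_pow_mul_sgn_ne_zero x.1.card x.2 m) fun x => by
    simp [psiPpos]

lemma isMonomialOn_psiMpos :
    IsMonomialOn (psiMpos m) (fun x => (x.1.erase m, x.2)) {x | m ∈ x.1} :=
  isMonomialOn_of_map_single (fun x => sgn_ne_zero x.1 m) fun x => by simp [psiMpos]

lemma ker_psiPpos : LinearMap.ker (psiPpos m) = Finsupp.supported ℂ ℂ {x | m ∉ x.2} :=
  (isMonomialOn_psiPpos m).ker_eq_supported_compl fun _ hx _ hy hxy =>
    Prod.ext (Prod.ext_iff.1 hxy).1 (Finset.erase_injOn' m hx hy (Prod.ext_iff.1 hxy).2)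

lemma ker_psiMpos : LinearMap.ker (psiMpos m) = Finsupp.supported ℂ ℂ {x | m ∉ x.1} :=
  (isMonomialOn_psiMpos m).ker_eq_supported_compl fun _ hx _ hy hxy =>
    Prod.ext (Finset.erase_injOn' m hx hy (Prod.ext_iff.1 hxy).1) (Prod.ext_iff.1 hxy).2

lemma PsiP_neg_natCast : PsiP (-m) = psiPneg m := by simp [PsiP]

lemma PsiM_neg_natCast : PsiM (-m) = psiMneg m := by simp [PsiM]

lemma PsiP_natCast_add_one : PsiP (m + 1) = psiPpos m := by
  simp [PsiP, show ¬(m + 1 : ℤ) ≤ 0 by omega]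

lemma PsiM_natCast_add_one : PsiM (m + 1) = psiMpos m := by
  simp [PsiM, show ¬(m + 1 : ℤ) ≤ 0 by omega]

end Modes

section Vacuum

lemma iInf_ker_annihilation_eq_span_vac :
    (⨅ m, LinearMap.ker (psiMpos m)) ⊓ ⨅ m, LinearMap.ker (psiPpos m) =
      Submodule.span ℂ {vac} := by
  have hset : (⋂ m : ℕ, {x : Finset ℕ × Finset ℕ | m ∉ x.1}) ∩ ⋂ m : ℕ, {x | m ∉ x.2} =
      {(∅, ∅)} := by
    ext x
    simp [Prod.ext_iff, Finset.eq_empty_iff_forall_notMem]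
  simp_rw [ker_psiMpos, ker_psiPpos, ← Finsupp.supported_iInter]
  rw [← Finsupp.supported_inter, hset, Finsupp.supported_eq_span_single, Set.image_singleton, vac]

/-- The part of the Fock space of degree less than `d`, where a monomial has as degree its number
of factors `Ψ±`. -/
noncomputable def degreeLT (d : ℕ) : Submodule ℂ FockF :=
  Finsupp.supported ℂ ℂ {x | x.1.card + x.2.card < d}

lemma exists_mem_degreeLT (v : FockF) : ∃ d, v ∈ degreeLT d :=
  ⟨v.support.sup (fun x => x.1.card + x.2.card) + 1, (Finsupp.mem_supported ℂ v).2 fun _ hx =>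
    Nat.lt_succ_of_le (Finset.le_sup (f := fun x => x.1.card + x.2.card) hx)⟩

lemma psiPpos_mem_degreeLT (m : ℕ) {d : ℕ} {v : FockF} (hv : v ∈ degreeLT (d + 1)) :
    psiPpos m v ∈ degreeLT d := by
  refine (isMonomialOn_psiPpos m).supported_le_comap_supported ?_ hv
  rintro ⟨A, B⟩ ⟨hd, hm : m ∈ B⟩
  have hcard := Finset.card_erase_lt_of_mem hm
  simp only [Set.mem_ofPred_eq] at hd ⊢
  omega

lemma psiMpos_mem_degreeLT (m : ℕ) {d : ℕ} {v : FockF} (hv : v ∈ degreeLT (d + 1)) :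
    psiMpos m v ∈ degreeLT d := by
  refine (isMonomialOn_psiMpos m).supported_le_comap_supported ?_ hv
  rintro ⟨A, B⟩ ⟨hd, hm : m ∈ A⟩
  have hcard := Finset.card_erase_lt_of_mem hm
  simp only [Set.mem_ofPred_eq] at hd ⊢
  omega

variable {U : Submodule ℂ FockF}

lemma vac_mem_of_annihilation_invariant (hU : U ≠ ⊥)
    (hP : ∀ j, U ∈ (psiPpos j).invtSubmodule) (hM : ∀ j, U ∈ (psiMpos j).invtSubmodule) :
    vac ∈ U := by
  obtain ⟨v, hvU, hv0⟩ := Submodule.exists_mem_ne_zero_of_ne_bot hU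
  obtain ⟨d, hd⟩ := exists_mem_degreeLT v
  induction d generalizing v with
  | zero => exact absurd (by simpa [degreeLT] using hd) hv0
  | succ d ih =>
    by_cases hker : v ∈ (⨅ m, LinearMap.ker (psiMpos m)) ⊓ ⨅ m, LinearMap.ker (psiPpos m)
    · rw [iInf_ker_annihilation_eq_span_vac] at hker
      obtain ⟨c, rfl⟩ := Submodule.mem_span_singleton.1 hker
      exact (Submodule.smul_mem_iff U (left_ne_zero_of_smul hv0)).1 hvU
    · simp only [Submodule.mem_inf, Submodule.mem_iInf, LinearMap.mem_ker, not_and_or,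
        not_forall] at hker
      obtain ⟨j, hj⟩ | ⟨j, hj⟩ := hker
      · exact ih _ (hM j hvU) hj (psiMpos_mem_degreeLT j hd)
      · exact ih _ (hP j hvU) hj (psiPpos_mem_degreeLT j hd)

lemma single_mem_of_creation_invariant (hvac : vac ∈ U) {A B : Finset ℕ}
    (hP : ∀ j ∈ A, U ∈ (psiPneg j).invtSubmodule)
    (hM : ∀ j ∈ B, U ∈ (psiMneg j).invtSubmodule) :
    Finsupp.single (A, B) 1 ∈ U := by
  induction A using Finset.induction_on with
  | insert a A ha ih =>
    exact (isMonomialOn_psiPneg a).single_mem_of_mem_invtSubmodule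
      (hP a (Finset.mem_insert_self a A)) ha (ih fun j hj => hP j (Finset.mem_insert_of_mem hj))
  | empty =>
    induction B using Finset.induction_on with
    | insert b B hb ih =>
      exact (isMonomialOn_psiMneg b).single_mem_of_mem_invtSubmodule
        (hM b (Finset.mem_insert_self b B)) hb (ih fun j hj => hM j (Finset.mem_insert_of_mem hj))
    | empty => exact hvac

end Vacuum

section Fbar

variable {m n : ℕ}

lemma Fbar_eq_supported (m n : ℕ) :
    Fbar m n = Finsupp.supported ℂ ℂ {x | m ∉ x.1 ∧ n ∉ x.2} := by
  rw [Finsupp.supported_eq_span_single, Fbar]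
  congr 1
  ext x
  simp [and_assoc, eq_comm]

lemma ker_psiMpos_inf_ker_psiPpos (m n : ℕ) :
    LinearMap.ker (psiMpos m) ⊓ LinearMap.ker (psiPpos n) = Fbar m n := by
  rw [ker_psiMpos, ker_psiPpos, ← Finsupp.supported_inter, Fbar_eq_supported, Set.ofPred_and]

lemma IsMonomialOn.Fbar_mem_invtSubmodule {T : Module.End ℂ FockF}
    {f : Finset ℕ × Finset ℕ → Finset ℕ × Finset ℕ} {s : Set (Finset ℕ × Finset ℕ)}
    (hT : IsMonomialOn T f s) (hf : ∀ x, m ∉ x.1 → n ∉ x.2 → m ∉ (f x).1 ∧ n ∉ (f x).2) :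
    Fbar m n ∈ T.invtSubmodule := by
  rw [Fbar_eq_supported]
  exact hT.supported_le_comap_supported fun x hx => hf x hx.1.1 hx.1.2

lemma Fbar_mem_invtSubmodule_psiPneg {j : ℕ} (hj : j ≠ m) :
    Fbar m n ∈ (psiPneg j).invtSubmodule :=
  (isMonomialOn_psiPneg j).Fbar_mem_invtSubmodule fun _ hm hn => by simp [hm, hn, hj.symm]

lemma Fbar_mem_invtSubmodule_psiMneg {j : ℕ} (hj : j ≠ n) :
    Fbar m n ∈ (psiMneg j).invtSubmodule :=
  (isMonomialOn_psiMneg j).Fbar_mem_invtSubmodule fun _ hm hn => by simp [hm, hn, hj.symm]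

lemma Fbar_mem_invtSubmodule_psiPpos (j : ℕ) : Fbar m n ∈ (psiPpos j).invtSubmodule :=
  (isMonomialOn_psiPpos j).Fbar_mem_invtSubmodule fun _ hm hn => by simp [hm, hn]

lemma Fbar_mem_invtSubmodule_psiMpos (j : ℕ) : Fbar m n ∈ (psiMpos j).invtSubmodule :=
  (isMonomialOn_psiMpos j).Fbar_mem_invtSubmodule fun _ hm hn => by simp [hm, hn]

lemma Fbar_le_of_invariant {U : Submodule ℂ FockF} (hU : U ≠ ⊥)
    (hPneg : ∀ j ≠ m, U ∈ (psiPneg j).invtSubmodule)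
    (hPpos : ∀ j, U ∈ (psiPpos j).invtSubmodule)
    (hMneg : ∀ j ≠ n, U ∈ (psiMneg j).invtSubmodule)
    (hMpos : ∀ j, U ∈ (psiMpos j).invtSubmodule) : Fbar m n ≤ U := by
  refine Submodule.span_le.2 ?_
  rintro _ ⟨A, B, hA, hB, rfl⟩
  exact single_mem_of_creation_invariant (vac_mem_of_annihilation_invariant hU hPpos hMpos)
    (fun j hj => hPneg j (ne_of_mem_of_not_mem hj hA))
    (fun j hj => hMneg j (ne_of_mem_of_not_mem hj hB))

lemma forall_smul_PsiP_PsiM_mem_iff (m n : ℕ) (U : Submodule ℂ FockF) :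
    (∀ i : ℤ, ∀ v ∈ U,
      ((-((i : ℂ) + (m : ℂ))) • PsiP i) v ∈ U ∧ ((-((i : ℂ) + (n : ℂ))) • PsiM i) v ∈ U) ↔
      ((∀ j ≠ m, U ∈ (psiPneg j).invtSubmodule) ∧ ∀ j, U ∈ (psiPpos j).invtSubmodule) ∧
        (∀ j ≠ n, U ∈ (psiMneg j).invtSubmodule) ∧ ∀ j, U ∈ (psiMpos j).invtSubmodule := by
  have hP := forall_mem_invtSubmodule_neg_add_smul_iff m PsiP U
  have hM := forall_mem_invtSubmodule_neg_add_smul_iff n PsiM U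
  simp only [PsiP_neg_natCast, PsiP_natCast_add_one] at hP
  simp only [PsiM_neg_natCast, PsiM_natCast_add_one] at hM
  rw [← hP, ← hM, ← forall_and]
  simp only [Module.End.mem_invtSubmodule_iff_forall_mem_of_mem, ← forall_and]

end Fbar

/-- For `m, n ∈ ℤ≥0` and the operators `G⁺(i−1/2) = −(i+m)Ψ⁺(i−1/2)`,
`G⁻(i−1/2) = −(i+n)Ψ⁻(i−1/2)`:
(a) `Ker_F G⁻(m+1/2) ∩ Ker_F G⁺(n+1/2) = F̄(−m/z, −n/z)`;
(b) `F̄(−m/z, −n/z)` is invariant under all `G⁺(r)`, `G⁻(r)`, `r ∈ 1/2+ℤ`, and is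
irreducible: its only invariant subspaces are `{0}` and `F̄(−m/z, −n/z)`. -/
theorem statement7 (m n : ℕ) :
    (LinearMap.ker ((-(((m : ℤ) + 1 : ℤ) : ℂ) - (n : ℂ)) • PsiM ((m : ℤ) + 1)) ⊓
        LinearMap.ker ((-(((n : ℤ) + 1 : ℤ) : ℂ) - (m : ℂ)) • PsiP ((n : ℤ) + 1)) =
      Fbar m n) ∧
    (∀ i : ℤ, ∀ v ∈ Fbar m n,
      ((-((i : ℂ) + (m : ℂ))) • PsiP i) v ∈ Fbar m n ∧
      ((-((i : ℂ) + (n : ℂ))) • PsiM i) v ∈ Fbar m n) ∧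
    (∀ U : Submodule ℂ FockF, U ≤ Fbar m n →
      (∀ i : ℤ, ∀ v ∈ U,
        ((-((i : ℂ) + (m : ℂ))) • PsiP i) v ∈ U ∧
        ((-((i : ℂ) + (n : ℂ))) • PsiM i) v ∈ U) →
      U = ⊥ ∨ U = Fbar m n) := by
  refine ⟨?_, (forall_smul_PsiP_PsiM_mem_iff m n _).2 ?_, fun U hU hG => ?_⟩
  · have hcoeff (a b : ℕ) : -(((a : ℤ) + 1 : ℤ) : ℂ) - b ≠ 0 := by
      have : -((a : ℤ) + 1) - b ≠ 0 := by omega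
      exact_mod_cast this
    rw [LinearMap.ker_smul _ _ (hcoeff m n), LinearMap.ker_smul _ _ (hcoeff n m),
      PsiM_natCast_add_one, PsiP_natCast_add_one, ker_psiMpos_inf_ker_psiPpos]
  · exact ⟨⟨fun _ => Fbar_mem_invtSubmodule_psiPneg, Fbar_mem_invtSubmodule_psiPpos⟩,
      fun _ => Fbar_mem_invtSubmodule_psiMneg, Fbar_mem_invtSubmodule_psiMpos⟩
  · obtain ⟨⟨hPneg, hPpos⟩, hMneg, hMpos⟩ := (forall_smul_PsiP_PsiM_mem_iff m n U).1 hG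
    exact or_iff_not_imp_left.2 fun hne =>
      hU.antisymm (Fbar_le_of_invariant hne hPneg hPpos hMneg hMpos)
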